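/- Let N ≥ 3, α > 0, p = N/(N-2), and fix l, k > 2p/(p-1) and a smooth nonincreasing function Ψ : ℝ → [0,1] with Ψ(s) = 1 for s ≤ 0 and Ψ(s) = 0 for s ≥ 1. For T, R > 1 define φ(t,x) = φ₁(t) φ₂(x) on Q = (0,∞) × {|x| ≥ 1}, where φ₁(t) = (1-t/T)^l for 0 ≤ t ≤ T and 0 for t > T, φ₂(x) = H(x) Ψ^k( ln(|x|/√R) / ln(√R) ). Then there exists a constant C > 0, independent of T and R, such that for all sufficiently large T and R: 𝓘₂ := ∫_Q φ^{-1/(p-1)} |φ_tt|^{p/(p-1)} dx dt ≤ C T^{1 - N} R^N (with the integrand interpreted as 0 where φ vanishes). -/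

import Mathlib

/-!
Since `p = N/(N-2)`, the exponents are `1/(p-1) = N/2 - 1` and `p/(p-1) = N/2`, and the condition
on `l` says `N < l`. For `0 < t < T` and `y = φ₂(x) > 0` the integrand is exactly
`(l(l-1))^{N/2} T^{-N} (1-t/T)^{l-N} y`, hence at most `(l(l-1))^{N/2} T^{-N} y`
(`timeIntegrand_le`). Moreover `0 ≤ φ₂ ≤ (N-2+α)/α`, and `φ₂` vanishes for `|x| ≥ R` because there
`ln(|x|/√R)/ln √R ≥ 1`. So the integrand is dominated by a constant multiple of `T^{-N}` on
`(0,T) × B(0,R)` and vanishes elsewhere; this set has measure `T R^N |B(0,1)|`.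
-/

open MeasureTheory Real Set

noncomputable section

/-- Euclidean space `ℝ^N`. -/
abbrev Euc (N : ℕ) := EuclideanSpace ℝ (Fin N)

/-- The Laplace operator: the trace of the Hessian, computed as the sum of second
directional derivatives along the standard orthonormal basis. -/
noncomputable def lap {N : ℕ} (f : Euc N → ℝ) (x : Euc N) : ℝ :=
  ∑ i : Fin N,
    fderiv ℝ (fun y => fderiv ℝ f y (EuclideanSpace.single i 1)) x (EuclideanSpace.single i 1)

/-- The exterior domain `Ω^c = ℝ^N \ B(0,1) = {x : |x| ≥ 1}` (closed complement of the
open unit ball). -/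
def extDom (N : ℕ) : Set (Euc N) := {x | 1 ≤ ‖x‖}

/-- The surface measure `σ` on the unit sphere `∂Ω`. -/
noncomputable def sphMeasure (N : ℕ) : Measure (Metric.sphere (0 : Euc N) 1) :=
  (volume : Measure (Euc N)).toSphere

/-- The harmonic function `H(x) = (N-2+α)/α - |x|^{2-N}`. -/
noncomputable def Hfun (N : ℕ) (α : ℝ) (x : Euc N) : ℝ :=
  ((N : ℝ) - 2 + α) / α - ‖x‖ ^ ((2 : ℝ) - N)

/-- The time factor `φ₁(t) = (1-t/T)^l` for `0 ≤ t ≤ T`, extended by `0` for `t > T`. -/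
noncomputable def phi1 (T l : ℝ) (t : ℝ) : ℝ := if t ≤ T then (1 - t / T) ^ l else 0

/-- The space factor `φ₂(x) = H(x) Ψ^k(ln(|x|/√R)/ln(√R))` with logarithmic argument. -/
noncomputable def phi2 (N : ℕ) (α k R : ℝ) (Ψ : ℝ → ℝ) (x : Euc N) : ℝ :=
  Hfun N α x * Ψ (Real.log (‖x‖ / Real.sqrt R) / Real.log (Real.sqrt R)) ^ k

/-- The test function `φ(t,x) = φ₁(t) φ₂(x)`. -/
noncomputable def phiTest (N : ℕ) (α l k T R : ℝ) (Ψ : ℝ → ℝ) (t : ℝ) (x : Euc N) : ℝ :=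
  phi1 T l t * phi2 N α k R Ψ x

lemma deriv_deriv_phi1_mul {T l t : ℝ} (hT : 0 < T) (ht : t < T) (y : ℝ) :
    deriv (deriv (fun s => phi1 T l s * y)) t
      = l * (l - 1) * (1 - t / T) ^ (l - 2) / T ^ 2 * y := by
  have hpos : ∀ s, s < T → 1 - s / T ≠ 0 := fun s hs => by
    have : s / T < 1 := (div_lt_one hT).2 hs
    linarith
  have hlin : ∀ s, HasDerivAt (fun s : ℝ => 1 - s / T) (-(1 / T)) s := fun s =>
    ((hasDerivAt_id s).div_const T).const_sub 1
  have h1 : ∀ s, s < T → HasDerivAt (fun s => phi1 T l s * y)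
      (-(1 / T) * l * (1 - s / T) ^ (l - 1) * y) s := fun s hs => by
    have h := ((hlin s).rpow_const (p := l) (Or.inl (hpos s hs))).mul_const y
    refine h.congr_of_eventuallyEq ?_
    filter_upwards [Iio_mem_nhds hs] with r hr
    simp only [phi1, if_pos (mem_Iio.1 hr).le]
  have h2 : deriv (fun s => phi1 T l s * y) =ᶠ[nhds t]
      fun s => -(1 / T) * l * (1 - s / T) ^ (l - 1) * y := by
    filter_upwards [Iio_mem_nhds ht] with s hs using (h1 s hs).deriv
  rw [h2.deriv_eq]
  have h := (((hlin t).rpow_const (p := l - 1) (Or.inl (hpos t ht))).const_mul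
    (-(1 / T) * l)).mul_const y
  rw [h.deriv, show l - 1 - 1 = l - 2 by ring]
  field_simp

/-- The bound on the integrand for fixed `x`, with `y = φ₂(x)` and `n = N`: the powers of
`1 - t/T` combine to the exponent `l - n > 0`, and those of `y` to the exponent `1`. -/
lemma timeIntegrand_le {T l t y n : ℝ} (hn : 1 < n) (hl : n < l) (hT : 0 < T) (h0 : 0 < t)
    (ht : t < T) (hy : 0 < y) :
    (phi1 T l t * y) ^ (-(n / 2 - 1)) * |deriv (deriv (fun s => phi1 T l s * y)) t| ^ (n / 2)
      ≤ (l * (l - 1)) ^ (n / 2) * T ^ (-n) * y := by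
  have hu1 : 1 - t / T ≤ 1 := by
    have : 0 < t / T := by positivity
    linarith
  have hu : 0 < 1 - t / T := by
    have : t / T < 1 := (div_lt_one hT).2 ht
    linarith
  have hB : 0 < l * (l - 1) := by nlinarith
  rw [deriv_deriv_phi1_mul hT ht, phi1, if_pos ht.le]
  generalize 1 - t / T = u at *
  rw [abs_of_nonneg (by positivity)]
  have e : (u ^ l * y) ^ (-(n / 2 - 1)) *
      (l * (l - 1) * u ^ (l - 2) / T ^ 2 * y) ^ (n / 2)
      = (l * (l - 1)) ^ (n / 2) * T ^ (-n) * y * u ^ (l - n) := by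
    have e1 : l * (l - 1) * u ^ (l - 2) / T ^ 2 * y
        = l * (l - 1) * (u ^ (l - 2) * (T ^ (-2 : ℝ) * y)) := by
      rw [rpow_neg hT.le, rpow_two]; field_simp
    rw [e1, mul_rpow hB.le (by positivity), mul_rpow (rpow_nonneg hu.le l) hy.le,
      mul_rpow (rpow_nonneg hu.le (l - 2)) (by positivity),
      mul_rpow (rpow_nonneg hT.le (-2)) hy.le, ← rpow_mul hu.le,
      ← rpow_mul hu.le, ← rpow_mul hT.le]
    have e2 : u ^ (l - n) = u ^ (l * -(n / 2 - 1)) * u ^ ((l - 2) * (n / 2)) := by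
      rw [← rpow_add hu]; congr 1; ring
    have e3 : y ^ (-(n / 2 - 1)) * y ^ (n / 2) = y := by
      rw [← rpow_add hy, show -(n / 2 - 1) + n / 2 = 1 by ring, rpow_one]
    have e4 : (-2 : ℝ) * (n / 2) = -n := by ring
    rw [e2, e4]
    linear_combination (l * (l - 1)) ^ (n / 2) * T ^ (-n) *
      (u ^ (l * -(n / 2 - 1)) * u ^ ((l - 2) * (n / 2))) * e3
  rw [e]
  exact mul_le_of_le_one_right (by positivity) (rpow_le_one hu.le hu1 (by linarith))

lemma phi2_nonneg {N : ℕ} (hN : 3 ≤ N) {α : ℝ} (hα : 0 < α) (k R : ℝ) {Ψ : ℝ → ℝ}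
    (hΨ : ∀ s, Ψ s ∈ Icc (0 : ℝ) 1) {x : Euc N} (hx : 1 ≤ ‖x‖) : 0 ≤ phi2 N α k R Ψ x := by
  have hN' : (3 : ℝ) ≤ N := by exact_mod_cast hN
  have h1 : ‖x‖ ^ ((2 : ℝ) - N) ≤ 1 := rpow_le_one_of_one_le_of_nonpos hx (by linarith)
  have h2 : 1 ≤ ((N : ℝ) - 2 + α) / α := by rw [le_div_iff₀ hα]; linarith
  exact mul_nonneg (by unfold Hfun; linarith) (rpow_nonneg (hΨ _).1 _)

lemma phi2_le {N : ℕ} (hN : 3 ≤ N) {α : ℝ} (hα : 0 < α) {k : ℝ} (hk : 0 ≤ k) (R : ℝ) {Ψ : ℝ → ℝ}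
    (hΨ : ∀ s, Ψ s ∈ Icc (0 : ℝ) 1) (x : Euc N) :
    phi2 N α k R Ψ x ≤ ((N : ℝ) - 2 + α) / α := by
  have hN' : (3 : ℝ) ≤ N := by exact_mod_cast hN
  have h1 : 0 ≤ ‖x‖ ^ ((2 : ℝ) - N) := rpow_nonneg (norm_nonneg _) _
  have h2 : 0 ≤ ((N : ℝ) - 2 + α) / α := div_nonneg (by linarith) hα.le
  have h3 := rpow_nonneg (hΨ (Real.log (‖x‖ / √R) / Real.log (√R))).1 k
  have h4 := rpow_le_one (hΨ (Real.log (‖x‖ / √R) / Real.log (√R))).1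
    (hΨ (Real.log (‖x‖ / √R) / Real.log (√R))).2 hk
  unfold phi2 Hfun
  nlinarith

lemma phi2_eq_zero {N : ℕ} {α k R : ℝ} (hk : 0 < k) (hR : 1 < R) {Ψ : ℝ → ℝ}
    (hΨ : ∀ s, 1 ≤ s → Ψ s = 0) {x : Euc N} (hx : R ≤ ‖x‖) : phi2 N α k R Ψ x = 0 := by
  have hs : 1 < √R := Real.lt_sqrt_of_sq_lt (by simpa using hR)
  have hlog : 0 < Real.log (√R) := Real.log_pos hs
  have : 1 ≤ Real.log (‖x‖ / √R) / Real.log (√R) := by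
    rw [le_div_iff₀ hlog, one_mul]
    apply Real.log_le_log (by linarith)
    rw [le_div_iff₀ (by linarith), Real.mul_self_sqrt (by linarith)]
    exact hx
  rw [phi2, hΨ _ this, zero_rpow hk.ne', mul_zero]

/-- Capacity estimate
`𝓘₂ = ∫_Q φ^{-1/(p-1)} |φ_tt|^{p/(p-1)} dx dt ≤ C T^{1-N} R^N`
for the test function `φ(t,x) = (1-t/T)^l H(x) Ψ^k(ln(|x|/√R)/ln √R)`,
with `C` independent of `T, R` and `T, R` sufficiently large. -/
theorem capacity_estimate_I2 (N : ℕ) (hN : 3 ≤ N) (α : ℝ) (hα : 0 < α)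
    (p : ℝ) (hp : p = (N : ℝ) / ((N : ℝ) - 2))
    (l k : ℝ) (hl : 2 * p / (p - 1) < l) (hk : 2 * p / (p - 1) < k)
    (Ψ : ℝ → ℝ) (hΨsmooth : ContDiff ℝ (⊤ : ℕ∞) Ψ)
    (hΨrange : ∀ s : ℝ, Ψ s ∈ Icc (0 : ℝ) 1)
    (hΨanti : Antitone Ψ)
    (hΨone : ∀ s : ℝ, s ≤ 0 → Ψ s = 1) (hΨzero : ∀ s : ℝ, 1 ≤ s → Ψ s = 0) :
    ∃ C > 0, ∃ T₀ R₀ : ℝ, 1 < T₀ ∧ 1 < R₀ ∧ ∀ T ≥ T₀, ∀ R ≥ R₀,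
      (∫ q in Ioi (0 : ℝ) ×ˢ extDom N,
          if phiTest N α l k T R Ψ q.1 q.2 = 0 then 0
          else (phiTest N α l k T R Ψ q.1 q.2) ^ (-(1 / (p - 1))) *
            |deriv (deriv (fun s => phiTest N α l k T R Ψ s q.2)) q.1| ^ (p / (p - 1)))
        ≤ C * T ^ (1 - (N : ℝ)) * R ^ (N : ℝ) := by
  have hN' : (3 : ℝ) ≤ N := by exact_mod_cast hN
  have hN2 : (N : ℝ) - 2 ≠ 0 := by linarith
  have hp1 : p - 1 = 2 / ((N : ℝ) - 2) := by rw [hp]; field_simp; ring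
  have ea : 1 / (p - 1) = (N : ℝ) / 2 - 1 := by rw [hp1]; field_simp
  have eb : p / (p - 1) = (N : ℝ) / 2 := by rw [hp1, hp]; field_simp
  have ec : 2 * p / (p - 1) = N := by rw [mul_div_assoc, eb]; ring
  rw [ec] at hl hk
  rw [ea, eb]
  have hM : 0 < ((N : ℝ) - 2 + α) / α := div_pos (by linarith) hα
  set M := ((N : ℝ) - 2 + α) / α with hMdef
  have hB : 0 < (l * (l - 1)) ^ ((N : ℝ) / 2) := rpow_pos_of_pos (by nlinarith) _
  set B := (l * (l - 1)) ^ ((N : ℝ) / 2) with hBdef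
  set V := (volume : Measure (Euc N)).real (Metric.ball 0 1) with hV
  have hVpos : 0 < V := by
    rw [hV, Measure.real, ENNReal.toReal_pos_iff]
    exact ⟨Metric.measure_ball_pos _ _ one_pos, measure_ball_lt_top⟩
  refine ⟨B * M * V, by positivity, 2, 2, by norm_num, by norm_num, fun T hT R hR => ?_⟩
  have hT0 : 0 < T := by linarith
  have hR0 : 0 < R := by linarith
  have hS : MeasurableSet (Ioi (0 : ℝ) ×ˢ extDom N) :=
    measurableSet_Ioi.prod (measurableSet_le measurable_const measurable_norm)
  have hA : MeasurableSet (Ioo (0 : ℝ) T ×ˢ Metric.ball (0 : Euc N) R) :=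
    measurableSet_Ioo.prod measurableSet_ball
  have hvol : volume (Ioo (0 : ℝ) T ×ˢ Metric.ball (0 : Euc N) R)
      = ENNReal.ofReal T * volume (Metric.ball (0 : Euc N) R) := by
    rw [Measure.volume_eq_prod, Measure.prod_prod, Real.volume_Ioo, sub_zero]
  have hfin : volume (Ioo (0 : ℝ) T ×ˢ Metric.ball (0 : Euc N) R) ≠ ⊤ := by
    rw [hvol]
    exact ENNReal.mul_ne_top ENNReal.ofReal_ne_top measure_ball_lt_top.ne
  have hreal : (volume : Measure (ℝ × Euc N)).real (Ioo (0 : ℝ) T ×ˢ Metric.ball (0 : Euc N) R)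
      = T * (R ^ N * V) := by
    rw [Measure.real, hvol, Measure.addHaar_ball_of_pos _ _ hR0, finrank_euclideanSpace_fin,
      ENNReal.toReal_mul, ENNReal.toReal_mul, ENNReal.toReal_ofReal hT0.le,
      ENNReal.toReal_ofReal (by positivity)]
    rfl
  rw [← integral_indicator hS]
  calc _ ≤ ∫ q, (Ioo (0 : ℝ) T ×ˢ Metric.ball (0 : Euc N) R).indicator
        (fun _ => B * T ^ (-(N : ℝ)) * M) q := by
        refine integral_mono_of_nonneg (Filter.Eventually.of_forall fun q => ?_)
          ((integrable_indicator_iff hA).2 (integrableOn_const hfin))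
          (Filter.Eventually.of_forall fun q => ?_)
        · refine indicator_nonneg (fun q hq => ?_) q
          obtain ⟨hq1, hq2⟩ := hq
          have hy := phi2_nonneg hN hα k R hΨrange hq2
          have h1 : 0 ≤ phi1 T l q.1 := by
            unfold phi1
            split_ifs with h
            · have : q.1 / T ≤ 1 := (div_le_one hT0).2 h
              exact rpow_nonneg (by linarith) _
            · exact le_rfl
          have h2 : 0 ≤ phiTest N α l k T R Ψ q.1 q.2 := mul_nonneg h1 hy
          split_ifs
          · exact le_rfl
          · positivity
        · refine indicator_le' (fun q hq => ?_) (fun q _ => ?_) q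
          · obtain ⟨hq1, hq2⟩ := hq
            split_ifs with h
            · exact indicator_nonneg (fun _ _ => by positivity) q
            · have hne : phi1 T l q.1 ≠ 0 ∧ phi2 N α k R Ψ q.2 ≠ 0 := mul_ne_zero_iff.1 h
              have hy := lt_of_le_of_ne (phi2_nonneg hN hα k R hΨrange hq2) hne.2.symm
              have hxR : ‖q.2‖ < R := by
                by_contra! hx
                exact hne.2 (phi2_eq_zero (by linarith) (by linarith) hΨzero hx)
              have htT : q.1 < T := by
                by_contra! ht
                refine hne.1 ?_
                rcases ht.eq_or_lt with ht | ht
                · rw [phi1, if_pos ht.ge, ← ht, div_self hT0.ne', sub_self,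
                    zero_rpow (by linarith)]
                · rw [phi1, if_neg ht.not_ge]
              rw [indicator_of_mem (show q ∈ Ioo (0 : ℝ) T ×ˢ Metric.ball (0 : Euc N) R from
                ⟨⟨hq1, htT⟩, by simpa using hxR⟩)]
              refine (timeIntegrand_le (n := N) (by linarith) hl hT0 hq1 htT hy).trans ?_
              exact mul_le_mul_of_nonneg_left
                (phi2_le hN hα (by linarith) R hΨrange q.2) (by positivity)
          · exact indicator_nonneg (fun _ _ => by positivity) q
    _ = B * M * V * T ^ (1 - (N : ℝ)) * R ^ (N : ℝ) := by
        rw [integral_indicator_const _ hA, hreal, smul_eq_mul, sub_eq_add_neg, rpow_add hT0,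
          rpow_one, rpow_natCast R]
        ring
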